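/- arXiv:1402.6679 — 2 statements merged into one kernel-verified Lean document; each statement's English description precedes it below -/
import Mathlib

section
/- Let P ≥ 2 be a natural number and let q be the least prime greater than P. Let m ≥ 3 be a natural number with m + 1 < q². If for every prime p ≤ P and every natural number n ≥ 2 one has n·p ≠ m − 1 and n·p ≠ m + 1, then m − 1 and m + 1 are both prime. (After the sieve removing n·p ± 1 has been performed using all primes up to P, every surviving number below the effective upper limit q² − 2 is a central number of a twin prime pair.) -/
/-- After sieving `n * p ± 1` with all primes `p ≤ P`, every surviving number below the
effective upper limit `q² - 2` (where `q` is the least prime greater than `P`) is a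
central number of a twin prime pair. -/
theorem twin_prime_sieve_effective_upper_limit
    (P q m : ℕ) (hP : 2 ≤ P)
    (hq : Nat.Prime q) (hqP : P < q) (hleast : ∀ r : ℕ, Nat.Prime r → P < r → q ≤ r)
    (hm : 3 ≤ m) (hupper : m + 1 < q ^ 2)
    (hsieve : ∀ p : ℕ, Nat.Prime p → p ≤ P → ∀ n : ℕ, 2 ≤ n →
      n * p ≠ m - 1 ∧ n * p ≠ m + 1) :
    Nat.Prime (m - 1) ∧ Nat.Prime (m + 1) := by
  have key : ∀ k : ℕ, 2 ≤ k → k < q ^ 2 →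
      (∀ p : ℕ, Nat.Prime p → p ≤ P → ∀ n : ℕ, 2 ≤ n → n * p ≠ k) → Nat.Prime k := by
    intro k hk hkq h
    by_contra hnp
    have hp : Nat.Prime k.minFac := Nat.minFac_prime (by omega)
    have hsq : k.minFac ^ 2 ≤ k := Nat.minFac_sq_le_self (by omega) hnp
    have hlt : k.minFac < q := lt_of_pow_lt_pow_left₀ 2 (Nat.zero_le _) (lt_of_le_of_lt hsq hkq)
    have hle : k.minFac ≤ P := by
      by_contra hc
      have := hleast _ hp (by omega)
      omega
    obtain ⟨n, hn⟩ := Nat.minFac_dvd k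
    have h2 := hp.two_le
    have hn2 : 2 ≤ n := by
      by_contra hc
      have : n ≤ 1 := by omega
      generalize k.minFac = d at *
      nlinarith
    exact h _ hp hle n hn2 (by rw [mul_comm]; exact hn.symm)
  exact ⟨key (m - 1) (by omega) (by omega) fun p hp hpP n hn => (hsieve p hp hpP n hn).1,
    key (m + 1) (by omega) hupper fun p hp hpP n hn => (hsieve p hp hpP n hn).2⟩
end

section
/- Let P ≥ 2 be a natural number and let q be the least prime greater than P. Let m be a natural number with 4 ≤ m and m + 2 ≤ q². If for every prime r ≤ P and every natural number n ≥ 2 one has m ≠ 2·n·r and m ≠ n·r − 1, then there exists a prime p with m = 2p and 2p + 1 prime. (After performing the Sophie Germain sieve using all primes up to P, every surviving number below the effective upper limit q² − 2 is the double of a Sophie Germain prime.) -/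
/-- After performing the Sophie Germain sieve (removing `2 * n * r` and `n * r - 1`)
using all primes `r ≤ P`, every surviving number below the effective upper limit
`q² - 2` (where `q` is the least prime greater than `P`) is the double of a Sophie
Germain prime. -/
theorem sophie_germain_sieve_effective_upper_limit
    (P q m : ℕ) (hP : 2 ≤ P)
    (hq : Nat.Prime q) (hqP : P < q) (hleast : ∀ r : ℕ, Nat.Prime r → P < r → q ≤ r)
    (hm : 4 ≤ m) (hupper : m + 2 ≤ q ^ 2)
    (hsieve : ∀ r : ℕ, Nat.Prime r → r ≤ P → ∀ n : ℕ, 2 ≤ n →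
      m ≠ 2 * (n * r) ∧ m ≠ n * r - 1) :
    ∃ p : ℕ, Nat.Prime p ∧ m = 2 * p ∧ Nat.Prime (2 * p + 1) := by
  have key : ∀ x : ℕ, 2 ≤ x → x < q ^ 2 → ¬ Nat.Prime x →
      ∃ r : ℕ, Nat.Prime r ∧ r ≤ P ∧ ∃ n : ℕ, 2 ≤ n ∧ x = n * r := by
    intro x hx hxq hnp
    have hr : Nat.Prime x.minFac := Nat.minFac_prime (by omega)
    have hsq : x.minFac ^ 2 ≤ x := Nat.minFac_sq_le_self (by omega) hnp
    have hlt : x.minFac < q := lt_of_pow_lt_pow_left₀ 2 (by omega) (lt_of_le_of_lt hsq hxq)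
    refine ⟨x.minFac, hr, ?_, ?_⟩
    · by_contra h
      have := hleast _ hr (by omega)
      omega
    · obtain ⟨n, hn⟩ := Nat.minFac_dvd x
      refine ⟨n, ?_, by rw [mul_comm]; exact hn⟩
      have h2 := hr.two_le
      have h3 : x.minFac * x.minFac ≤ x.minFac * n := by
        rw [← hn, ← sq]; exact hsq
      have := Nat.le_of_mul_le_mul_left h3 (by omega)
      omega
  obtain ⟨p, hp | hp⟩ : ∃ p, m = 2 * p ∨ m = 2 * p + 1 := ⟨m / 2, by omega⟩
  · refine ⟨p, ?_, hp, ?_⟩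
    · by_contra h
      obtain ⟨r, hr, hrP, n, hn, hx⟩ := key p (by omega) (by omega) h
      exact (hsieve r hr hrP n hn).1 (by rw [← hx]; exact hp)
    · by_contra h
      obtain ⟨r, hr, hrP, n, hn, hx⟩ := key (2 * p + 1) (by omega) (by omega) h
      exact (hsieve r hr hrP n hn).2 (by rw [← hx]; omega)
  · exact absurd (by omega) (hsieve 2 Nat.prime_two hP (p + 1) (by omega)).2
end
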